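/- arXiv:2310.19136 — 4 statements merged into one kernel-verified Lean document; each statement's English description precedes it below -/
import Mathlib

section
/- Suppose the design satisfies PP_{R,R}(α₁,α₂,α₃,α₄) with α₁ ∈ (0,1). Then TP_R(a₁,a₂) holds with constants a₁ := √((3/4)(1−α₁)) and a₂ := ((α₂+α₃)²/(1−α₁) + α₄)^{1/2}; that is, ‖𝔛^{(n)}(V)‖₂ ≥ a₁‖V‖_Π − a₂R(V) for every V ∈ D. -/
/-!
Taking `W = V` in the product property gives, with `p = ‖V‖_Π`, `r = R V` and
`N` the empirical norm of `V`, the lower bound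
`N² ≥ (1 - α₁) p² - (α₂ + α₃) r p - α₄ r²`.
By Young's inequality `(α₂ + α₃) r p ≤ (1 - α₁) p² / 4 + (α₂ + α₃)² r² / (1 - α₁)`, so
`(a₁ p)² ≤ N² + (a₂ r)² ≤ (N + a₂ r)²`, and the claim follows by taking square roots.
-/

open Finset

namespace Stmt0

/-- The matrix space `D = ℝ^{d₁ × d₂}`, viewed as functions. -/
abbrev Mat (d₁ d₂ : ℕ) : Type := Fin d₁ → Fin d₂ → ℝ

/-- Trace inner product `⟪V, W⟫ = tr (Vᵀ W)`. -/
def dotM {d₁ d₂ : ℕ} (V W : Mat d₁ d₂) : ℝ := ∑ i, ∑ j, V i j * W i j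

/-- Euclidean norm on `ℝⁿ`. -/
noncomputable def nrm2 {n : ℕ} (u : Fin n → ℝ) : ℝ := Real.sqrt (∑ i, (u i) ^ 2)

/-- A positive semidefinite (symmetric) bilinear form. -/
structure IsPSDForm {d₁ d₂ : ℕ} (P : Mat d₁ d₂ → Mat d₁ d₂ → ℝ) : Prop where
  symm : ∀ V W, P V W = P W V
  add_left : ∀ U V W, P (U + V) W = P U W + P V W
  smul_left : ∀ (c : ℝ) (V W : Mat d₁ d₂), P (c • V) W = c * P V W
  nonneg : ∀ V, 0 ≤ P V V

/-- `N` is a norm. -/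
def IsNorm {d₁ d₂ : ℕ} (N : Mat d₁ d₂ → ℝ) : Prop :=
  (∀ x y, N (x + y) ≤ N x + N y) ∧ (∀ (c : ℝ) x, N (c • x) = |c| * N x) ∧
    ∀ x, N x = 0 → x = 0

/-- The pseudo-norm `‖V‖_Π` associated to the form `P`. -/
noncomputable def pnorm {d₁ d₂ : ℕ} (P : Mat d₁ d₂ → Mat d₁ d₂ → ℝ) (V : Mat d₁ d₂) : ℝ :=
  Real.sqrt (P V V)

theorem IsNorm.nonneg {d₁ d₂ : ℕ} {N : Mat d₁ d₂ → ℝ} (hN : IsNorm N) (x : Mat d₁ d₂) :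
    0 ≤ N x := by
  obtain ⟨hadd, hsmul, -⟩ := hN
  have h0 : N 0 = 0 := by simpa using hsmul 0 0
  have hneg : N (-x) = N x := by simpa using hsmul (-1) x
  have h := hadd x (-x)
  rw [add_neg_cancel, h0, hneg] at h
  linarith

theorem nrm2_div_sqrt_sq {n : ℕ} (u : Fin n → ℝ) :
    nrm2 (fun i => u i / Real.sqrt n) ^ 2 = (1 / (n : ℝ)) * ∑ i, u i * u i := by
  unfold nrm2
  rw [Real.sq_sqrt (Finset.sum_nonneg fun i _ => sq_nonneg _), Finset.mul_sum]
  refine Finset.sum_congr rfl fun i _ => ?_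
  rw [div_pow, Real.sq_sqrt (Nat.cast_nonneg n)]
  ring

/-- Young's inequality with the weight that leaves three quarters of the quadratic term. -/
theorem young_quarter {b : ℝ} (hb : 0 < b) (s p r : ℝ) :
    s * r * p ≤ b / 4 * p ^ 2 + s ^ 2 / b * r ^ 2 := by
  have h : b / 4 * p ^ 2 + s ^ 2 / b * r ^ 2 - s * r * p = (b * p / 2 - s * r) ^ 2 / b := by
    field_simp
    ring
  have : 0 ≤ (b * p / 2 - s * r) ^ 2 / b := by positivity
  linarith

/-- `PP_{R,R}(α₁,α₂,α₃,α₄)` with `α₁ ∈ (0,1)` implies `TP_R(a₁,a₂)`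
with `a₁ = √((3/4)(1−α₁))` and `a₂ = ((α₂+α₃)²/(1−α₁) + α₄)^{1/2}`. -/
theorem stmt0
    (d₁ d₂ n : ℕ) (hn : 1 ≤ n)
    (X : Fin n → Mat d₁ d₂)
    (P : Mat d₁ d₂ → Mat d₁ d₂ → ℝ) (hP : IsPSDForm P)
    (R : Mat d₁ d₂ → ℝ) (hR : IsNorm R)
    (α₁ α₂ α₃ α₄ : ℝ)
    (hα₁ : 0 < α₁) (hα₁' : α₁ < 1) (hα₂ : 0 < α₂) (hα₃ : 0 < α₃) (hα₄ : 0 < α₄)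
    (hPP : ∀ V W : Mat d₁ d₂,
      |(1 / (n : ℝ)) * ∑ i, dotM (X i) V * dotM (X i) W - P V W| ≤
        α₁ * pnorm P V * pnorm P W + α₂ * R V * pnorm P W
          + α₃ * pnorm P V * R W + α₄ * R V * R W) :
    ∀ V : Mat d₁ d₂,
      Real.sqrt ((3 / 4) * (1 - α₁)) * pnorm P V
          - Real.sqrt ((α₂ + α₃) ^ 2 / (1 - α₁) + α₄) * R V ≤
        nrm2 (fun i => dotM (X i) V / Real.sqrt n) := by
  intro V
  have hb : 0 < 1 - α₁ := sub_pos.mpr hα₁'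
  have hr : 0 ≤ R V := hR.nonneg V
  have hN : 0 ≤ nrm2 (fun i => dotM (X i) V / Real.sqrt n) := Real.sqrt_nonneg _
  have hNsq := nrm2_div_sqrt_sq (fun i => dotM (X i) V)
  have hpsq : pnorm P V ^ 2 = P V V := Real.sq_sqrt (hP.nonneg V)
  have hlow := (abs_le.mp (hPP V V)).1
  have hyoung := young_quarter hb (α₂ + α₃) (pnorm P V) (R V)
  have ha₂ : 0 ≤ (α₂ + α₃) ^ 2 / (1 - α₁) + α₄ := by positivity
  have hq : 0 ≤ Real.sqrt ((α₂ + α₃) ^ 2 / (1 - α₁) + α₄) * R V := by positivity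
  rw [sub_le_iff_le_add]
  refine abs_le_of_sq_le_sq' ?_ (add_nonneg hN hq) |>.2
  have hcross := mul_nonneg hN hq
  rw [mul_pow, Real.sq_sqrt (by positivity), add_sq, mul_pow, Real.sq_sqrt ha₂, hNsq]
  rw [← hpsq] at hlow
  nlinarith [hlow, hyoung, hcross]

end Stmt0
end

section
/- For every pair [B,Γ] ∈ D×D with ‖B‖_∞ ≤ a, the estimator satisfies: ⟨Δ^{(n)} + Δ^θ, 𝔐^{(n)}(Δ_B + Δ_Γ, Δ^θ)⟩ ≤ ⟨ξ^{(n)}, 𝔐^{(n)}(Δ_B + Δ_Γ, Δ^θ)⟩ + λ(R(B) − R(B̂)) + χ(S(Γ) − S(Γ̂)) + τ(‖θ*‖_♯ − ‖θ̂‖_♯). -/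
/-!
The objective is a quadratic plus a convex penalty and the constraint set is convex, so the claim
is the first-order optimality condition at the minimizer in the direction of `(B, Γ, θ*)`. Moving
a fraction `t ∈ (0, 1]` along the segment from `(B̂, Γ̂, θ̂)` to `(B, Γ, θ*)` changes the residual
`r` at the estimator to `r + t m`, where `m` is the augmented design applied to the error, while by
convexity the penalty grows by at most `t` times its total difference. Minimality, divided by `t`,
gives `0 ≤ ⟨r, m⟩ + (penalty difference) + (t / 2) ‖m‖²`; let `t → 0⁺` and expand
`r = ξ⁽ⁿ⁾ - (Δ⁽ⁿ⁾ + Δ^θ)`.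

The only convexity that is not immediate is that of the Slope norm, which follows from the
rearrangement inequality (`sum_perm_le_slope`, `slope_convex`).
-/

open Finset
open scoped ENNReal

namespace Stmt8

/-- The matrix space `D = ℝ^{d₁ × d₂}`, viewed as functions. -/
abbrev Mat (d₁ d₂ : ℕ) : Type := Fin d₁ → Fin d₂ → ℝ

/-- Trace inner product `⟪V, W⟫ = tr (Vᵀ W)`. -/
def dotM {d₁ d₂ : ℕ} (V W : Mat d₁ d₂) : ℝ := ∑ i, ∑ j, V i j * W i j

/-- Euclidean inner product on `ℝⁿ`. -/
def ipV {n : ℕ} (u v : Fin n → ℝ) : ℝ := ∑ i, u i * v i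

/-- Euclidean norm on `ℝⁿ`. -/
noncomputable def nrm2 {n : ℕ} (u : Fin n → ℝ) : ℝ := Real.sqrt (∑ i, (u i) ^ 2)

/-- Frobenius norm. -/
noncomputable def fnorm {d₁ d₂ : ℕ} (V : Mat d₁ d₂) : ℝ := Real.sqrt (dotM V V)

/-- A positive semidefinite (symmetric) bilinear form. -/
structure IsPSDForm {d₁ d₂ : ℕ} (P : Mat d₁ d₂ → Mat d₁ d₂ → ℝ) : Prop where
  symm : ∀ V W, P V W = P W V
  add_left : ∀ U V W, P (U + V) W = P U W + P V W
  smul_left : ∀ (c : ℝ) (V W : Mat d₁ d₂), P (c • V) W = c * P V W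
  nonneg : ∀ V, 0 ≤ P V V

/-- `N` is a norm on matrix space. -/
def IsNorm {d₁ d₂ : ℕ} (N : Mat d₁ d₂ → ℝ) : Prop :=
  (∀ x y, N (x + y) ≤ N x + N y) ∧ (∀ (c : ℝ) x, N (c • x) = |c| * N x) ∧
    ∀ x, N x = 0 → x = 0

/-- Pseudo-norm `‖V‖_Π`. -/
noncomputable def pnorm {d₁ d₂ : ℕ} (P : Mat d₁ d₂ → Mat d₁ d₂ → ℝ) (V : Mat d₁ d₂) : ℝ :=
  Real.sqrt (P V V)

/-- Pseudo-norm of a pair `‖[V,W]‖_Π`. -/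
noncomputable def pairPi {d₁ d₂ : ℕ} (P : Mat d₁ d₂ → Mat d₁ d₂ → ℝ) (V W : Mat d₁ d₂) : ℝ :=
  Real.sqrt (P V V + P W W)

/-- Pseudo-norm of a triple `‖[V,W,u]‖_Π`. -/
noncomputable def triplePi {d₁ d₂ n : ℕ} (P : Mat d₁ d₂ → Mat d₁ d₂ → ℝ)
    (V W : Mat d₁ d₂) (u : Fin n → ℝ) : ℝ :=
  Real.sqrt (P V V + P W W + ∑ i, (u i) ^ 2)

/-- Normalized design `𝔛^{(n)}(V)`. -/
noncomputable def designOpN {d₁ d₂ n : ℕ} (X : Fin n → Mat d₁ d₂) (V : Mat d₁ d₂) :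
    Fin n → ℝ := fun i => dotM (X i) V / Real.sqrt n

/-- Normalized augmented design `𝔐^{(n)}(V,u) = 𝔛^{(n)}(V) + u`. -/
noncomputable def MopN {d₁ d₂ n : ℕ} (X : Fin n → Mat d₁ d₂) (V : Mat d₁ d₂) (u : Fin n → ℝ) :
    Fin n → ℝ := fun i => dotM (X i) V / Real.sqrt n + u i

/-- The nonincreasing rearrangement `u♯` of the absolute values of `u`. -/
noncomputable def sharp {n : ℕ} (u : Fin n → ℝ) : Fin n → ℝ :=
  fun i => |u ((Tuple.sort fun k => -|u k|) i)|

/-- The Slope weights `ωᵢ = √(log (A n / i))`, `i = 1, …, n`. -/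
noncomputable def slopeW (A : ℝ) (n : ℕ) (i : Fin n) : ℝ :=
  Real.sqrt (Real.log (A * n / ((i : ℕ) + 1)))

/-- The Slope norm `‖u‖♯ = ∑ᵢ ωᵢ u♯ᵢ`. -/
noncomputable def slope {n : ℕ} (A : ℝ) (u : Fin n → ℝ) : ℝ :=
  ∑ i, slopeW A n i * sharp u i

/-- The tail sum `∑_{i=o+1}^n ωᵢ u♯ᵢ`. -/
noncomputable def slopeTail {n : ℕ} (A : ℝ) (o : ℕ) (u : Fin n → ℝ) : ℝ :=
  ∑ i ∈ Finset.univ.filter (fun i : Fin n => o ≤ (i : ℕ)), slopeW A n i * sharp u i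

/-- `Ω = (∑_{i=1}^o ωᵢ²)^{1/2}`. -/
noncomputable def bigOmega (A : ℝ) (n o : ℕ) : ℝ :=
  Real.sqrt (∑ i ∈ Finset.univ.filter (fun i : Fin n => (i : ℕ) < o), (slopeW A n i) ^ 2)

/-- Number of nonzero coordinates `‖u‖₀`. -/
noncomputable def supp0 {n : ℕ} (u : Fin n → ℝ) : ℕ :=
  (Finset.univ.filter (fun i => u i ≠ 0)).card

/-- The estimator objective (q = 2). -/
noncomputable def objective {d₁ d₂ n : ℕ} (X : Fin n → Mat d₁ d₂) (y : Fin n → ℝ)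
    (R S : Mat d₁ d₂ → ℝ) (A lam chi tau : ℝ) (B Γ : Mat d₁ d₂) (θ : Fin n → ℝ) : ℝ :=
  (1 / 2) * ∑ i, (y i / Real.sqrt n - dotM (X i) (B + Γ) / Real.sqrt n - θ i) ^ 2
    + lam * R B + chi * S Γ + tau * slope A θ

/-- The constraint `‖B‖_∞ ≤ a` with `a ∈ (0, ∞]`. -/
def InfLe {d₁ d₂ : ℕ} (B : Mat d₁ d₂) (a : ℝ≥0∞) : Prop :=
  ∀ i j, ENNReal.ofReal |B i j| ≤ a

lemma slopeW_antitone {A : ℝ} (hA : 0 < A) (n : ℕ) : Antitone (slopeW A n) := by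
  intro i j hij
  have hn : (0 : ℝ) < n := by exact_mod_cast (Nat.zero_le _).trans_lt i.2
  have hij' : ((i : ℕ) : ℝ) ≤ ((j : ℕ) : ℝ) := by exact_mod_cast hij
  unfold slopeW
  apply Real.sqrt_le_sqrt
  apply Real.log_le_log
  · positivity
  · gcongr

lemma sharp_antitone {n : ℕ} (u : Fin n → ℝ) : Antitone (sharp u) := by
  intro i j hij
  have h := Tuple.monotone_sort (fun k => -|u k|) hij
  simp only [Function.comp_apply] at h
  unfold sharp
  linarith

/-- The Slope norm dominates `∑ᵢ ωᵢ |u_{σ(i)}|` for every permutation `σ`, with equality at the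
sorting permutation: this is the rearrangement inequality, and it exhibits the Slope norm as a
maximum of weighted `ℓ¹` norms. -/
lemma sum_perm_le_slope {A : ℝ} (hA : 0 < A) {n : ℕ} (u : Fin n → ℝ)
    (σ : Equiv.Perm (Fin n)) : ∑ i, slopeW A n i * |u (σ i)| ≤ slope A u := by
  have hmono : Monovary (slopeW A n) (sharp u) :=
    (slopeW_antitone hA n).monovary (sharp_antitone u)
  have h := hmono.sum_mul_comp_perm_le_sum_mul
    (σ := σ.trans (Tuple.sort fun k => -|u k|).symm)
  simpa [sharp, slope] using h

lemma slope_convex {A : ℝ} (hA : 0 < A) {n : ℕ} (u v : Fin n → ℝ) {t : ℝ}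
    (ht0 : 0 ≤ t) (ht1 : t ≤ 1) :
    slope A ((1 - t) • u + t • v) ≤ (1 - t) * slope A u + t * slope A v := by
  set w := (1 - t) • u + t • v with hw
  set σ := Tuple.sort fun k => -|w k|
  calc slope A w = ∑ i, slopeW A n i * |w (σ i)| := rfl
    _ ≤ ∑ i, ((1 - t) * (slopeW A n i * |u (σ i)|) + t * (slopeW A n i * |v (σ i)|)) := by
        refine Finset.sum_le_sum fun i _ => ?_
        have h : |w (σ i)| ≤ (1 - t) * |u (σ i)| + t * |v (σ i)| := by
          have h' := abs_add_le ((1 - t) * u (σ i)) (t * v (σ i))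
          rw [abs_mul, abs_mul, abs_of_nonneg ht0, abs_of_nonneg (sub_nonneg.2 ht1)] at h'
          simpa [hw] using h'
        have hpos : 0 ≤ slopeW A n i := Real.sqrt_nonneg _
        nlinarith [mul_le_mul_of_nonneg_left h hpos]
    _ = (1 - t) * ∑ i, slopeW A n i * |u (σ i)| + t * ∑ i, slopeW A n i * |v (σ i)| := by
        rw [Finset.sum_add_distrib, Finset.mul_sum, Finset.mul_sum]
    _ ≤ (1 - t) * slope A u + t * slope A v :=
        add_le_add
          (mul_le_mul_of_nonneg_left (sum_perm_le_slope hA u σ) (sub_nonneg.2 ht1))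
          (mul_le_mul_of_nonneg_left (sum_perm_le_slope hA v σ) ht0)

lemma IsNorm.convex {d₁ d₂ : ℕ} {N : Mat d₁ d₂ → ℝ} (hN : IsNorm N) (U V : Mat d₁ d₂) {t : ℝ}
    (ht0 : 0 ≤ t) (ht1 : t ≤ 1) :
    N ((1 - t) • U + t • V) ≤ (1 - t) * N U + t * N V := by
  have h := hN.1 ((1 - t) • U) (t • V)
  rwa [hN.2.1, hN.2.1, abs_of_nonneg ht0, abs_of_nonneg (sub_nonneg.2 ht1)] at h

lemma InfLe.convex {d₁ d₂ : ℕ} {a : ℝ≥0∞} {U V : Mat d₁ d₂} (hU : InfLe U a) (hV : InfLe V a)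
    {t : ℝ} (ht0 : 0 ≤ t) (ht1 : t ≤ 1) : InfLe ((1 - t) • U + t • V) a := by
  intro i j
  rcases eq_or_ne a ⊤ with rfl | ha
  · exact le_top
  have hu := (ENNReal.ofReal_le_iff_le_toReal ha).1 (hU i j)
  have hv := (ENNReal.ofReal_le_iff_le_toReal ha).1 (hV i j)
  rw [ENNReal.ofReal_le_iff_le_toReal ha]
  have h := abs_add_le ((1 - t) * U i j) (t * V i j)
  rw [abs_mul, abs_mul, abs_of_nonneg ht0, abs_of_nonneg (sub_nonneg.2 ht1)] at h
  have h' : |((1 - t) • U + t • V) i j| ≤ (1 - t) * |U i j| + t * |V i j| := by simpa using h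
  nlinarith [mul_le_mul_of_nonneg_left hu (sub_nonneg.2 ht1), mul_le_mul_of_nonneg_left hv ht0]

lemma dotM_add {d₁ d₂ : ℕ} (X U V : Mat d₁ d₂) : dotM X (U + V) = dotM X U + dotM X V := by
  simp [dotM, mul_add, Finset.sum_add_distrib]

lemma dotM_smul {d₁ d₂ : ℕ} (X : Mat d₁ d₂) (c : ℝ) (V : Mat d₁ d₂) :
    dotM X (c • V) = c * dotM X V := by
  simp [dotM, Finset.mul_sum, mul_left_comm]

lemma dotM_sub {d₁ d₂ : ℕ} (X U V : Mat d₁ d₂) : dotM X (U - V) = dotM X U - dotM X V := by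
  simp [dotM, mul_sub, Finset.sum_sub_distrib]

/-- Elementary form of the passage to the limit `t → 0⁺`. -/
lemma nonneg_of_forall_add_mul {c q : ℝ} (h : ∀ t : ℝ, 0 < t → t ≤ 1 → 0 ≤ c + t * q) :
    0 ≤ c := by
  by_contra! hc
  have hd : 0 < |q| - c := by linarith [abs_nonneg q]
  -- `t = -c / (2 (|q| - c))` lies in `(0, 1]` and satisfies `t |q| ≤ -c / 2`.
  have ht : 0 < -c / (2 * (|q| - c)) := div_pos (by linarith) (by linarith)
  have ht1 : -c / (2 * (|q| - c)) ≤ 1 := by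
    rw [div_le_one (by linarith)]
    linarith [abs_nonneg q]
  have h1 := h _ ht ht1
  have h2 : -c / (2 * (|q| - c)) * (|q| - c) = -c / 2 := by
    field_simp
  nlinarith [mul_le_mul_of_nonneg_left (le_abs_self q) ht.le, mul_pos ht (neg_pos.2 hc)]

/-- first-order-condition inequality for the (q = 2) estimator. -/
theorem stmt8
    (d₁ d₂ n o : ℕ) (hn : 1 ≤ n) (ho : 1 ≤ o) (hon : o ≤ n)
    (A : ℝ) (hA : 2 ≤ A)
    (X : Fin n → Mat d₁ d₂)
    (R S : Mat d₁ d₂ → ℝ) (hR : IsNorm R) (hS : IsNorm S)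
    (lam chi tau : ℝ) (hlam : 0 < lam) (hchi : 0 < chi) (htau : 0 < tau)
    (a : ℝ≥0∞) (ha : 0 < a)
    (f ξ θstar : Fin n → ℝ) (hθsparse : supp0 θstar ≤ o)
    (y : Fin n → ℝ) (hy : y = fun i => f i + Real.sqrt n * θstar i + ξ i)
    (Bh Γh : Mat d₁ d₂) (θh : Fin n → ℝ)
    (hfeas : InfLe Bh a)
    (hmin : ∀ (B Γ : Mat d₁ d₂) (θ : Fin n → ℝ), InfLe B a →
      objective X y R S A lam chi tau Bh Γh θh ≤ objective X y R S A lam chi tau B Γ θ) :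
    ∀ B Γ : Mat d₁ d₂, InfLe B a →
      ipV (fun i => (dotM (X i) (Bh + Γh) - f i) / Real.sqrt n + (θh i - θstar i))
          (MopN X ((Bh - B) + (Γh - Γ)) (fun i => θh i - θstar i)) ≤
        ipV (fun i => ξ i / Real.sqrt n)
            (MopN X ((Bh - B) + (Γh - Γ)) (fun i => θh i - θstar i))
          + lam * (R B - R Bh) + chi * (S Γ - S Γh)
          + tau * (slope A θstar - slope A θh) := by
  intro B Γ hB
  have hA0 : 0 < A := by linarith
  have hsn : Real.sqrt n ≠ 0 := ne_of_gt (Real.sqrt_pos.2 (by exact_mod_cast hn))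
  -- `m` is the augmented design applied to the error, `r` the residual at the estimator.
  set m := MopN X ((Bh - B) + (Γh - Γ)) (fun i => θh i - θstar i) with hm
  set r : Fin n → ℝ := fun i => y i / Real.sqrt n - dotM (X i) (Bh + Γh) / Real.sqrt n - θh i
    with hr
  have hdecomp : ∀ i, r i = ξ i / Real.sqrt n
      - ((dotM (X i) (Bh + Γh) - f i) / Real.sqrt n + (θh i - θstar i)) := by
    intro i
    simp only [hr, hy]
    field_simp
    ring
  have hip : ∑ i, r i * m i = ipV (fun i => ξ i / Real.sqrt n) m
      - ipV (fun i => (dotM (X i) (Bh + Γh) - f i) / Real.sqrt n + (θh i - θstar i)) m := by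
    simp only [ipV, ← Finset.sum_sub_distrib]
    refine Finset.sum_congr rfl fun i _ => ?_
    rw [hdecomp]
    ring
  have key : 0 ≤ ∑ i, r i * m i + lam * (R B - R Bh) + chi * (S Γ - S Γh)
      + tau * (slope A θstar - slope A θh) := by
    refine nonneg_of_forall_add_mul (q := (1 / 2) * ∑ i, (m i) ^ 2) fun t ht ht1 => ?_
    have h := hmin ((1 - t) • Bh + t • B) ((1 - t) • Γh + t • Γ) ((1 - t) • θh + t • θstar)
      (hfeas.convex hB ht.le ht1)
    have hres : ∀ i, y i / Real.sqrt n
        - dotM (X i) (((1 - t) • Bh + t • B) + ((1 - t) • Γh + t • Γ)) / Real.sqrt n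
        - ((1 - t) • θh + t • θstar) i = r i + t * m i := by
      intro i
      simp only [hr, hm, MopN, dotM_add, dotM_sub, dotM_smul, Pi.add_apply, Pi.smul_apply,
        smul_eq_mul]
      ring
    have hsq : ∑ i, (r i + t * m i) ^ 2
        = ∑ i, (r i) ^ 2 + 2 * t * ∑ i, r i * m i + t ^ 2 * ∑ i, (m i) ^ 2 := by
      simp only [Finset.mul_sum, ← Finset.sum_add_distrib]
      exact Finset.sum_congr rfl fun i _ => by ring
    simp only [objective, hres, hsq] at h
    change (1 / 2) * ∑ i, (r i) ^ 2 + _ + _ + _ ≤ _ at h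
    have h1 := mul_le_mul_of_nonneg_left (hR.convex Bh B ht.le ht1) hlam.le
    have h2 := mul_le_mul_of_nonneg_left (hS.convex Γh Γ ht.le ht1) hchi.le
    have h3 := mul_le_mul_of_nonneg_left (slope_convex hA0 θh θstar ht.le ht1) htau.le
    refine nonneg_of_mul_nonneg_right (a := t) ?_ ht
    linarith
  linarith

end Stmt8
end

section
/- Assume (𝔛,ξ) satisfies MP_{R,S,‖·‖_♯}(f₁,f₂,f₃,f₄) and 𝔛 satisfies ATP_{R,S,‖·‖_♯}(t₁,t₂,t₃,t₄). Let σ > 0, f* ≥ 0 and let [B,Γ] satisfy ‖B‖_∞ ≤ a and |⟨⟨Δ_B,Δ_Γ⟩⟩_Π| ≤ f*·S(Δ_Γ). Define ▲ := max(σt₂, 2f₂)·R(Δ_B) + max(σt₃, 2f₃+2f*)·S(Δ_Γ) + max(σt₄, 2f₄)·‖Δ^θ‖_♯ and ▼ := λ(R(B) − R(B̂)) + χ(S(Γ) − S(Γ̂)) + τ(‖θ*‖_♯ − ‖θ̂‖_♯). Then ‖Δ^{(n)} + Δ^θ‖₂² + (max(t₁‖[Δ_B,Δ_Γ,Δ^θ]‖_Π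 − ▲/σ, 0))² ≤ ‖𝔛^{(n)}(B+Γ) − f^{(n)}‖₂² + 2f₁‖[Δ_B,Δ_Γ,Δ^θ]‖_Π + ▲ + 2▼. -/
/-!
Write `e = 𝔛⁽ⁿ⁾(B̂+Γ̂) - f⁽ⁿ⁾ + Δ^θ`, `h = 𝔛⁽ⁿ⁾(B+Γ) - f⁽ⁿ⁾` and `m = e - h = 𝔐⁽ⁿ⁾(Δ_B+Δ_Γ, Δ^θ)`.

The objective is convex, so comparing the minimizer with the points of the segment joining it to
`[B, Γ, θ*]` and letting the step tend to zero yields the variational inequality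
`⟨e - ξ⁽ⁿ⁾, m⟩ ≤ ▼` (`first_order`). By the parallelogram-type identity
`‖e‖² + ‖m‖² - ‖h‖² = 2⟨e, m⟩`, this gives `‖e‖² + ‖m‖² ≤ ‖h‖² + 2⟨ξ⁽ⁿ⁾, m⟩ + 2▼`.
The noise term is bounded by MP. The quantity `‖m‖²` is bounded below through ATP
and the hypothesis on `⟨⟨Δ_B, Δ_Γ⟩⟩_Π`; the maxima in `▲` are chosen to absorb both bounds.

Convexity of the Slope norm (`slope_convex`) follows from the rearrangement inequality: the weights
are nonincreasing, so `slope A u` dominates `∑ᵢ ωᵢ |u (π i)|` for each permutation `π`.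
-/

open Finset
open scoped ENNReal

namespace Stmt9

/-- The matrix space `D = ℝ^{d₁ × d₂}`, viewed as functions. -/
abbrev Mat (d₁ d₂ : ℕ) : Type := Fin d₁ → Fin d₂ → ℝ

/-- Trace inner product `⟪V, W⟫ = tr (Vᵀ W)`. -/
def dotM {d₁ d₂ : ℕ} (V W : Mat d₁ d₂) : ℝ := ∑ i, ∑ j, V i j * W i j

/-- Euclidean inner product on `ℝⁿ`. -/
def ipV {n : ℕ} (u v : Fin n → ℝ) : ℝ := ∑ i, u i * v i

/-- Euclidean norm on `ℝⁿ`. -/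
noncomputable def nrm2 {n : ℕ} (u : Fin n → ℝ) : ℝ := Real.sqrt (∑ i, (u i) ^ 2)

/-- Frobenius norm. -/
noncomputable def fnorm {d₁ d₂ : ℕ} (V : Mat d₁ d₂) : ℝ := Real.sqrt (dotM V V)

/-- A positive semidefinite (symmetric) bilinear form. -/
structure IsPSDForm {d₁ d₂ : ℕ} (P : Mat d₁ d₂ → Mat d₁ d₂ → ℝ) : Prop where
  symm : ∀ V W, P V W = P W V
  add_left : ∀ U V W, P (U + V) W = P U W + P V W
  smul_left : ∀ (c : ℝ) (V W : Mat d₁ d₂), P (c • V) W = c * P V W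
  nonneg : ∀ V, 0 ≤ P V V

/-- `N` is a norm on matrix space. -/
def IsNorm {d₁ d₂ : ℕ} (N : Mat d₁ d₂ → ℝ) : Prop :=
  (∀ x y, N (x + y) ≤ N x + N y) ∧ (∀ (c : ℝ) x, N (c • x) = |c| * N x) ∧
    ∀ x, N x = 0 → x = 0

/-- Pseudo-norm `‖V‖_Π`. -/
noncomputable def pnorm {d₁ d₂ : ℕ} (P : Mat d₁ d₂ → Mat d₁ d₂ → ℝ) (V : Mat d₁ d₂) : ℝ :=
  Real.sqrt (P V V)

/-- Pseudo-norm of a pair `‖[V,W]‖_Π`. -/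
noncomputable def pairPi {d₁ d₂ : ℕ} (P : Mat d₁ d₂ → Mat d₁ d₂ → ℝ) (V W : Mat d₁ d₂) : ℝ :=
  Real.sqrt (P V V + P W W)

/-- Pseudo-norm of a triple `‖[V,W,u]‖_Π`. -/
noncomputable def triplePi {d₁ d₂ n : ℕ} (P : Mat d₁ d₂ → Mat d₁ d₂ → ℝ)
    (V W : Mat d₁ d₂) (u : Fin n → ℝ) : ℝ :=
  Real.sqrt (P V V + P W W + ∑ i, (u i) ^ 2)

/-- Normalized design `𝔛^{(n)}(V)`. -/
noncomputable def designOpN {d₁ d₂ n : ℕ} (X : Fin n → Mat d₁ d₂) (V : Mat d₁ d₂) :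
    Fin n → ℝ := fun i => dotM (X i) V / Real.sqrt n

/-- Normalized augmented design `𝔐^{(n)}(V,u) = 𝔛^{(n)}(V) + u`. -/
noncomputable def MopN {d₁ d₂ n : ℕ} (X : Fin n → Mat d₁ d₂) (V : Mat d₁ d₂) (u : Fin n → ℝ) :
    Fin n → ℝ := fun i => dotM (X i) V / Real.sqrt n + u i

/-- The nonincreasing rearrangement `u♯` of the absolute values of `u`. -/
noncomputable def sharp {n : ℕ} (u : Fin n → ℝ) : Fin n → ℝ :=
  fun i => |u ((Tuple.sort fun k => -|u k|) i)|

/-- The Slope weights `ωᵢ = √(log (A n / i))`, `i = 1, …, n`. -/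
noncomputable def slopeW (A : ℝ) (n : ℕ) (i : Fin n) : ℝ :=
  Real.sqrt (Real.log (A * n / ((i : ℕ) + 1)))

/-- The Slope norm `‖u‖♯ = ∑ᵢ ωᵢ u♯ᵢ`. -/
noncomputable def slope {n : ℕ} (A : ℝ) (u : Fin n → ℝ) : ℝ :=
  ∑ i, slopeW A n i * sharp u i

/-- The tail sum `∑_{i=o+1}^n ωᵢ u♯ᵢ`. -/
noncomputable def slopeTail {n : ℕ} (A : ℝ) (o : ℕ) (u : Fin n → ℝ) : ℝ :=
  ∑ i ∈ Finset.univ.filter (fun i : Fin n => o ≤ (i : ℕ)), slopeW A n i * sharp u i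

/-- `Ω = (∑_{i=1}^o ωᵢ²)^{1/2}`. -/
noncomputable def bigOmega (A : ℝ) (n o : ℕ) : ℝ :=
  Real.sqrt (∑ i ∈ Finset.univ.filter (fun i : Fin n => (i : ℕ) < o), (slopeW A n i) ^ 2)

/-- Number of nonzero coordinates `‖u‖₀`. -/
noncomputable def supp0 {n : ℕ} (u : Fin n → ℝ) : ℕ :=
  (Finset.univ.filter (fun i => u i ≠ 0)).card

/-- The estimator objective (q = 2). -/
noncomputable def objective {d₁ d₂ n : ℕ} (X : Fin n → Mat d₁ d₂) (y : Fin n → ℝ)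
    (R S : Mat d₁ d₂ → ℝ) (A lam chi tau : ℝ) (B Γ : Mat d₁ d₂) (θ : Fin n → ℝ) : ℝ :=
  (1 / 2) * ∑ i, (y i / Real.sqrt n - dotM (X i) (B + Γ) / Real.sqrt n - θ i) ^ 2
    + lam * R B + chi * S Γ + tau * slope A θ

/-- The constraint `‖B‖_∞ ≤ a` with `a ∈ (0, ∞]`. -/
def InfLe {d₁ d₂ : ℕ} (B : Mat d₁ d₂) (a : ℝ≥0∞) : Prop :=
  ∀ i j, ENNReal.ofReal |B i j| ≤ a

lemma slopeW_nonneg (A : ℝ) (n : ℕ) (i : Fin n) : 0 ≤ slopeW A n i := Real.sqrt_nonneg _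

lemma slopeW_antitone {A : ℝ} (hA : 2 ≤ A) (n : ℕ) : Antitone (slopeW A n) := by
  intro i j hij
  unfold slopeW
  have hn : (0 : ℝ) < n := by exact_mod_cast (Nat.zero_le _).trans_lt i.isLt
  have hAn : 0 < A * n := by positivity
  have hij' : ((i : ℕ) : ℝ) ≤ (j : ℕ) := by exact_mod_cast hij
  gcongr

lemma sharp_antitone {n : ℕ} (u : Fin n → ℝ) : Antitone (sharp u) := by
  intro i j hij
  have := Tuple.monotone_sort (fun k => -|u k|) hij
  simpa [sharp] using this

lemma slope_nonneg {n : ℕ} (A : ℝ) (u : Fin n → ℝ) : 0 ≤ slope A u :=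
  Finset.sum_nonneg fun i _ => mul_nonneg (slopeW_nonneg A n i) (abs_nonneg _)

/-- Rearrangement inequality: the Slope norm is the largest of the weighted `ℓ¹` sums over all
orderings of the coordinates. -/
lemma sum_perm_le_slope {n : ℕ} {A : ℝ} (hA : 2 ≤ A) (u : Fin n → ℝ) (π : Equiv.Perm (Fin n)) :
    ∑ i, slopeW A n i * |u (π i)| ≤ slope A u := by
  have hmv : Monovary (slopeW A n) (sharp u) :=
    (slopeW_antitone hA n).monovary (sharp_antitone u)
  have h := hmv.sum_mul_comp_perm_le_sum_mul
    (σ := π.trans (Tuple.sort fun k => -|u k|).symm)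
  simpa [sharp, slope] using h

lemma slope_convex {n : ℕ} {A : ℝ} (hA : 2 ≤ A) (u v : Fin n → ℝ) {s : ℝ} (hs : 0 ≤ s)
    (hs1 : s ≤ 1) :
    slope A (fun i => (1 - s) * u i + s * v i) ≤ (1 - s) * slope A u + s * slope A v := by
  set w : Fin n → ℝ := fun i => (1 - s) * u i + s * v i
  set π := Tuple.sort fun k => -|w k|
  have h1 : slope A w ≤ (1 - s) * ∑ i, slopeW A n i * |u (π i)|
      + s * ∑ i, slopeW A n i * |v (π i)| := by
    rw [Finset.mul_sum, Finset.mul_sum, ← Finset.sum_add_distrib]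
    refine Finset.sum_le_sum fun i _ => ?_
    have h : |w (π i)| ≤ (1 - s) * |u (π i)| + s * |v (π i)| := by
      refine (abs_add_le _ _).trans ?_
      rw [abs_mul, abs_mul, abs_of_nonneg hs, abs_of_nonneg (sub_nonneg.2 hs1)]
    calc slopeW A n i * |w (π i)|
        ≤ slopeW A n i * ((1 - s) * |u (π i)| + s * |v (π i)|) :=
          mul_le_mul_of_nonneg_left h (slopeW_nonneg A n i)
      _ = _ := by ring
  have h2 := mul_le_mul_of_nonneg_left (sum_perm_le_slope hA u π) (sub_nonneg.2 hs1)
  have h3 := mul_le_mul_of_nonneg_left (sum_perm_le_slope hA v π) hs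
  linarith

lemma IsNorm.nonneg {d₁ d₂ : ℕ} {N : Mat d₁ d₂ → ℝ} (hN : IsNorm N) (x : Mat d₁ d₂) :
    0 ≤ N x := by
  have h0 : N 0 = 0 := by simpa using hN.2.1 0 0
  have h1 : N (-x) = N x := by simpa using hN.2.1 (-1) x
  have h2 := hN.1 x (-x)
  rw [add_neg_cancel, h0, h1] at h2
  linarith

lemma IsNorm.convex {d₁ d₂ : ℕ} {N : Mat d₁ d₂ → ℝ} (hN : IsNorm N) (x y : Mat d₁ d₂) {s : ℝ}
    (hs : 0 ≤ s) (hs1 : s ≤ 1) : N ((1 - s) • x + s • y) ≤ (1 - s) * N x + s * N y := by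
  refine (hN.1 _ _).trans ?_
  rw [hN.2.1, hN.2.1, abs_of_nonneg hs, abs_of_nonneg (sub_nonneg.2 hs1)]

lemma InfLe.convex {d₁ d₂ : ℕ} {B C : Mat d₁ d₂} {a : ℝ≥0∞} (hB : InfLe B a) (hC : InfLe C a)
    {s : ℝ} (hs : 0 ≤ s) (hs1 : s ≤ 1) : InfLe ((1 - s) • B + s • C) a := by
  intro i j
  have h : |((1 - s) • B + s • C) i j| ≤ max |B i j| |C i j| := by
    simp only [Pi.add_apply, Pi.smul_apply, smul_eq_mul]
    refine (abs_add_le _ _).trans ?_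
    rw [abs_mul, abs_mul, abs_of_nonneg hs, abs_of_nonneg (sub_nonneg.2 hs1)]
    have h1 := mul_le_mul_of_nonneg_left (le_max_left |B i j| |C i j|) (sub_nonneg.2 hs1)
    have h2 := mul_le_mul_of_nonneg_left (le_max_right |B i j| |C i j|) hs
    linarith
  refine (ENNReal.ofReal_le_ofReal h).trans ?_
  rcases max_choice |B i j| |C i j| with h | h <;> rw [h]
  exacts [hB i j, hC i j]

lemma dotM_add_right {d₁ d₂ : ℕ} (U V W : Mat d₁ d₂) : dotM U (V + W) = dotM U V + dotM U W := by
  simp [dotM, mul_add, Finset.sum_add_distrib]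

lemma dotM_smul_right {d₁ d₂ : ℕ} (c : ℝ) (U V : Mat d₁ d₂) :
    dotM U (c • V) = c * dotM U V := by
  simp only [dotM, Finset.mul_sum, Pi.smul_apply, smul_eq_mul]
  exact Finset.sum_congr rfl fun i _ => Finset.sum_congr rfl fun j _ => by ring

lemma dotM_sub_right {d₁ d₂ : ℕ} (U V W : Mat d₁ d₂) : dotM U (V - W) = dotM U V - dotM U W := by
  simp [dotM, mul_sub, Finset.sum_sub_distrib]

lemma nrm2_sq {n : ℕ} (u : Fin n → ℝ) : nrm2 u ^ 2 = ∑ i, u i ^ 2 :=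
  Real.sq_sqrt (Finset.sum_nonneg fun _ _ => sq_nonneg _)

/-- Variational inequality at the minimizer: the derivative of the quadratic loss towards
`[B, Γ, θ]` is at least the decrease of the penalty from the minimizer to that point. -/
lemma first_order {d₁ d₂ n : ℕ} {A : ℝ} (hA : 2 ≤ A) (X : Fin n → Mat d₁ d₂)
    {R S : Mat d₁ d₂ → ℝ} (hR : IsNorm R) (hS : IsNorm S) {lam chi tau : ℝ}
    (hlam : 0 < lam) (hchi : 0 < chi) (htau : 0 < tau) {a : ℝ≥0∞} (y : Fin n → ℝ)
    (Bh Γh : Mat d₁ d₂) (θh : Fin n → ℝ) (hfeas : InfLe Bh a)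
    (hmin : ∀ (B Γ : Mat d₁ d₂) (θ : Fin n → ℝ), InfLe B a →
      objective X y R S A lam chi tau Bh Γh θh ≤ objective X y R S A lam chi tau B Γ θ)
    (B Γ : Mat d₁ d₂) (θ : Fin n → ℝ) (hB : InfLe B a) :
    0 ≤ ∑ i, (y i / Real.sqrt n - dotM (X i) (Bh + Γh) / Real.sqrt n - θh i)
          * MopN X ((Bh - B) + (Γh - Γ)) (fun i => θh i - θ i) i
      + (lam * (R B - R Bh) + chi * (S Γ - S Γh) + tau * (slope A θ - slope A θh)) := by
  set r : Fin n → ℝ := fun i => y i / Real.sqrt n - dotM (X i) (Bh + Γh) / Real.sqrt n - θh i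
    with hr
  set m : Fin n → ℝ := MopN X ((Bh - B) + (Γh - Γ)) (fun i => θh i - θ i) with hm
  set D := lam * (R B - R Bh) + chi * (S Γ - S Γh) + tau * (slope A θ - slope A θh) with hD
  have key : ∀ s : ℝ, 0 < s → s ≤ 1 →
      0 ≤ ∑ i, r i * m i + D + s * ((1 / 2) * ∑ i, m i ^ 2) := by
    intro s hs hs1
    have h := hmin ((1 - s) • Bh + s • B) ((1 - s) • Γh + s • Γ)
      (fun i => (1 - s) * θh i + s * θ i) (hfeas.convex hB hs.le hs1)
    unfold objective at h
    have hres : ∑ i, (y i / Real.sqrt n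
          - dotM (X i) (((1 - s) • Bh + s • B) + ((1 - s) • Γh + s • Γ)) / Real.sqrt n
          - ((1 - s) * θh i + s * θ i)) ^ 2
        = ∑ i, r i ^ 2 + 2 * s * ∑ i, r i * m i + s ^ 2 * ∑ i, m i ^ 2 := by
      rw [Finset.mul_sum, Finset.mul_sum, ← Finset.sum_add_distrib, ← Finset.sum_add_distrib]
      refine Finset.sum_congr rfl fun i _ => ?_
      simp only [hr, hm, MopN, dotM_add_right, dotM_smul_right, dotM_sub_right]
      ring
    rw [hres] at h
    have h1 := mul_le_mul_of_nonneg_left (hR.convex Bh B hs.le hs1) hlam.le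
    have h2 := mul_le_mul_of_nonneg_left (hS.convex Γh Γ hs.le hs1) hchi.le
    have h3 := mul_le_mul_of_nonneg_left (slope_convex hA θh θ hs.le hs1) htau.le
    refine (mul_nonneg_iff_of_pos_left hs).1 ?_
    rw [hD]
    linarith
  -- Let the step `s` tend to `0` from the right.
  have hlim : Filter.Tendsto (fun s : ℝ => ∑ i, r i * m i + D + s * ((1 / 2) * ∑ i, m i ^ 2))
      (nhdsWithin 0 (Set.Ioi 0)) (nhds (∑ i, r i * m i + D + 0 * ((1 / 2) * ∑ i, m i ^ 2))) :=
    ((by fun_prop : Continuous fun s : ℝ =>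
      ∑ i, r i * m i + D + s * ((1 / 2) * ∑ i, m i ^ 2)).tendsto 0).mono_left nhdsWithin_le_nhds
  have hge := ge_of_tendsto hlim (b := 0) (by
    filter_upwards [Ioc_mem_nhdsGT (zero_lt_one' ℝ)] with s hs
    exact key s hs.1 hs.2)
  simpa using hge

/-- MP + ATP imply the basic recursion inequality for the
(q = 2) estimator. -/
theorem stmt9
    (d₁ d₂ n o : ℕ) (hn : 1 ≤ n) (ho : 1 ≤ o) (hon : o ≤ n)
    (A : ℝ) (hA : 2 ≤ A)
    (X : Fin n → Mat d₁ d₂)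
    (P : Mat d₁ d₂ → Mat d₁ d₂ → ℝ) (hP : IsPSDForm P)
    (R S : Mat d₁ d₂ → ℝ) (hR : IsNorm R) (hS : IsNorm S)
    (lam chi tau : ℝ) (hlam : 0 < lam) (hchi : 0 < chi) (htau : 0 < tau)
    (a : ℝ≥0∞) (ha : 0 < a)
    (f ξ θstar : Fin n → ℝ) (hθsparse : supp0 θstar ≤ o)
    (y : Fin n → ℝ) (hy : y = fun i => f i + Real.sqrt n * θstar i + ξ i)
    (Bh Γh : Mat d₁ d₂) (θh : Fin n → ℝ)
    (hfeas : InfLe Bh a)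
    (hmin : ∀ (B Γ : Mat d₁ d₂) (θ : Fin n → ℝ), InfLe B a →
      objective X y R S A lam chi tau Bh Γh θh ≤ objective X y R S A lam chi tau B Γ θ)
    -- design constants
    (f₁ f₂ f₃ f₄ t₁ t₂ t₃ t₄ : ℝ)
    (hf₁ : 0 < f₁) (hf₂ : 0 < f₂) (hf₃ : 0 < f₃) (hf₄ : 0 < f₄)
    (ht₁ : 0 < t₁) (ht₂ : 0 < t₂) (ht₃ : 0 < t₃) (ht₄ : 0 < t₄)
    -- MP_{R,S,‖·‖♯}(f₁,f₂,f₃,f₄)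
    (hMP : ∀ (V W : Mat d₁ d₂) (u : Fin n → ℝ),
      |ipV (fun i => ξ i / Real.sqrt n) (MopN X (V + W) u)| ≤
        f₁ * triplePi P V W u + f₂ * R V + f₃ * S W + f₄ * slope A u)
    -- ATP_{R,S,‖·‖♯}(t₁,t₂,t₃,t₄)
    (hATP : ∀ (V W : Mat d₁ d₂) (u : Fin n → ℝ),
      t₁ * triplePi P V W u - t₂ * R V - t₃ * S W - t₄ * slope A u ≤
        Real.sqrt (max ((nrm2 (MopN X (V + W) u)) ^ 2 - 2 * P V W) 0))
    (σ fstar : ℝ) (hσ : 0 < σ) (hfstar : 0 ≤ fstar) :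
    ∀ B Γ : Mat d₁ d₂, InfLe B a →
      |P (Bh - B) (Γh - Γ)| ≤ fstar * S (Γh - Γ) →
      ∀ blacktri blackdown : ℝ,
        blacktri = max (σ * t₂) (2 * f₂) * R (Bh - B)
          + max (σ * t₃) (2 * f₃ + 2 * fstar) * S (Γh - Γ)
          + max (σ * t₄) (2 * f₄) * slope A (fun i => θh i - θstar i) →
        blackdown = lam * (R B - R Bh) + chi * (S Γ - S Γh)
          + tau * (slope A θstar - slope A θh) →
        (nrm2 (fun i => (dotM (X i) (Bh + Γh) - f i) / Real.sqrt n
            + (θh i - θstar i))) ^ 2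
          + (max (t₁ * triplePi P (Bh - B) (Γh - Γ) (fun i => θh i - θstar i)
              - blacktri / σ) 0) ^ 2 ≤
        (nrm2 (fun i => (dotM (X i) (B + Γ) - f i) / Real.sqrt n)) ^ 2
          + 2 * f₁ * triplePi P (Bh - B) (Γh - Γ) (fun i => θh i - θstar i)
          + blacktri + 2 * blackdown := by
  intro B Γ hB hPb T D hT hD
  have hsn : Real.sqrt n ≠ 0 := (Real.sqrt_pos.2 (by exact_mod_cast hn)).ne'
  have hfo := first_order hA X hR hS hlam hchi htau y Bh Γh θh hfeas hmin B Γ θstar hB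
  have hmp := (le_abs_self _).trans (hMP (Bh - B) (Γh - Γ) (fun i => θh i - θstar i))
  have hatp := hATP (Bh - B) (Γh - Γ) (fun i => θh i - θstar i)
  rw [← hD] at hfo
  have hRn := hR.nonneg (Bh - B)
  have hSn := hS.nonneg (Γh - Γ)
  have hQn := slope_nonneg A (fun i => θh i - θstar i)
  set m : Fin n → ℝ := MopN X ((Bh - B) + (Γh - Γ)) (fun i => θh i - θstar i) with hm
  set N := triplePi P (Bh - B) (Γh - Γ) (fun i => θh i - θstar i)
  set q := slope A (fun i => θh i - θstar i)
  set p := P (Bh - B) (Γh - Γ)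
  set ρ := R (Bh - B)
  set ς := S (Γh - Γ)
  -- `‖e‖² + ‖m‖² - ‖h‖² = 2⟨e, m⟩`, with `e = ξ⁽ⁿ⁾ - residual` at the minimizer.
  have hid : nrm2 (fun i => (dotM (X i) (Bh + Γh) - f i) / Real.sqrt n
        + (θh i - θstar i)) ^ 2 + nrm2 m ^ 2
      = nrm2 (fun i => (dotM (X i) (B + Γ) - f i) / Real.sqrt n) ^ 2
        + 2 * ipV (fun i => ξ i / Real.sqrt n) m
        - 2 * ∑ i, (y i / Real.sqrt n - dotM (X i) (Bh + Γh) / Real.sqrt n - θh i) * m i := by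
    simp only [nrm2_sq, ipV]
    rw [Finset.mul_sum, Finset.mul_sum, ← Finset.sum_add_distrib, ← Finset.sum_add_distrib,
      ← Finset.sum_sub_distrib]
    refine Finset.sum_congr rfl fun i _ => ?_
    have hyi : y i / Real.sqrt n = f i / Real.sqrt n + θstar i + ξ i / Real.sqrt n := by
      rw [hy]; field_simp
    rw [hyi]
    simp only [hm, MopN, dotM_add_right, dotM_sub_right]
    ring
  -- The coefficients of `▲` dominate `σ` times those of ATP.
  have hL : t₁ * N - T / σ ≤ t₁ * N - t₂ * ρ - t₃ * ς - t₄ * q := by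
    have h1 := mul_le_mul_of_nonneg_right (le_max_left (σ * t₂) (2 * f₂)) hRn
    have h2 := mul_le_mul_of_nonneg_right (le_max_left (σ * t₃) (2 * f₃ + 2 * fstar)) hSn
    have h3 := mul_le_mul_of_nonneg_right (le_max_left (σ * t₄) (2 * f₄)) hQn
    have : t₂ * ρ + t₃ * ς + t₄ * q ≤ T / σ := by
      rw [le_div_iff₀ hσ, hT]
      linarith
    linarith
  -- They also dominate twice those of MP, plus the bound on the cross term `2⟨⟨Δ_B, Δ_Γ⟩⟩_Π`.
  have hU : 2 * f₂ * ρ + (2 * f₃ + 2 * fstar) * ς + 2 * f₄ * q ≤ T := by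
    have h1 := mul_le_mul_of_nonneg_right (le_max_right (σ * t₂) (2 * f₂)) hRn
    have h2 := mul_le_mul_of_nonneg_right (le_max_right (σ * t₃) (2 * f₃ + 2 * fstar)) hSn
    have h3 := mul_le_mul_of_nonneg_right (le_max_right (σ * t₄) (2 * f₄)) hQn
    linarith
  have hsq : (max (t₁ * N - T / σ) 0) ^ 2 ≤ max (nrm2 m ^ 2 - 2 * p) 0 := by
    rw [← Real.sq_sqrt (le_max_right (nrm2 m ^ 2 - 2 * p) 0)]
    exact pow_le_pow_left₀ (le_max_right _ _)
      (max_le (hL.trans hatp) (Real.sqrt_nonneg _)) 2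
  have hlow : (max (t₁ * N - T / σ) 0) ^ 2 ≤ nrm2 m ^ 2 + 2 * fstar * ς := by
    refine hsq.trans (max_le ?_ ?_)
    · linarith [neg_le_of_abs_le hPb]
    · have := mul_nonneg hfstar hSn
      nlinarith [sq_nonneg (nrm2 m)]
  linarith

end Stmt9
end

section
/- Assume (𝔛,ξ) satisfies MP_{R,S,‖·‖_♯}(f₁,f₂,f₃,f₄), 𝔛 satisfies ATP_{R,S,‖·‖_♯}(t₁,t₂,t₃,t₄) and IP_{R,S,‖·‖_♯}(b₁,b₂,b₃,b₄). Let σ > 0, f* ≥ 0 and let [B,Γ] satisfy ‖B‖_∞ ≤ a and |⟨⟨Δ_B,Δ_Γ⟩⟩_Π| ≤ f*·S(Δ_Γ). Define ▲̂ := max(σt₂, 2f₂ + 2b₂‖Δ^θ‖₂)·R(Δ_B) + max(σt₃, 2f₃ + 2f* + 2b₃‖Δ^θ‖₂)·S(Δ_Γ) and ▼̂ := λ(R(B) − R(B̂)) + χ(S(Γ) − S(Γ̂)). Then ‖Δ^{(n)}‖₂² + (max(t₁‖[Δ_B,Δ_Γ]‖_Π − ▲̂/σ, 0))² ≤ ‖𝔛^{(n)}(B+Γ)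 − f^{(n)}‖₂² + (2f₁ + 2b₁‖Δ^θ‖₂ + 2b₄‖Δ^θ‖_♯)·‖[Δ_B,Δ_Γ]‖_Π + ▲̂ + 2▼̂. -/
/-! The inequality comes from first-order optimality of the estimator in `(B, Γ)` with `θ = θ̂` held
fixed. Moving from `(B̂, Γ̂)` towards `(B, Γ)` by a step `t ∈ (0, 1]` stays feasible and increases the
convex penalties by at most `t · ▼̂`, so letting `t → 0` in the quadratic gives
`0 ≤ ⟨r̂, v⟩ + ▼̂`, where `v = 𝔛⁽ⁿ⁾(Δ_B + Δ_Γ)` and `r̂ = ξ⁽ⁿ⁾ - Δ⁽ⁿ⁾ - Δ^θ` is the residual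
(`optimality`). The polarization identity turns `2⟨Δ⁽ⁿ⁾, v⟩` into
`‖Δ⁽ⁿ⁾‖² + ‖v‖² - ‖𝔛⁽ⁿ⁾(B + Γ) - f⁽ⁿ⁾‖²`. Then MP at `u = 0` bounds `⟨ξ⁽ⁿ⁾, v⟩`, IP at `u = Δ^θ`
bounds `⟨Δ^θ, v⟩`, and ATP at `u = 0`, with the bound on `⟨⟨Δ_B, Δ_Γ⟩⟩_Π`, bounds `‖v‖²` below. -/

open Finset
open scoped ENNReal

namespace Stmt13

/-- The matrix space `D = ℝ^{d₁ × d₂}`, viewed as functions. -/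
abbrev Mat (d₁ d₂ : ℕ) : Type := Fin d₁ → Fin d₂ → ℝ

/-- Trace inner product `⟪V, W⟫ = tr (Vᵀ W)`. -/
def dotM {d₁ d₂ : ℕ} (V W : Mat d₁ d₂) : ℝ := ∑ i, ∑ j, V i j * W i j

/-- Euclidean inner product on `ℝⁿ`. -/
def ipV {n : ℕ} (u v : Fin n → ℝ) : ℝ := ∑ i, u i * v i

/-- Euclidean norm on `ℝⁿ`. -/
noncomputable def nrm2 {n : ℕ} (u : Fin n → ℝ) : ℝ := Real.sqrt (∑ i, (u i) ^ 2)

/-- Frobenius norm. -/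
noncomputable def fnorm {d₁ d₂ : ℕ} (V : Mat d₁ d₂) : ℝ := Real.sqrt (dotM V V)

/-- A positive semidefinite (symmetric) bilinear form. -/
structure IsPSDForm {d₁ d₂ : ℕ} (P : Mat d₁ d₂ → Mat d₁ d₂ → ℝ) : Prop where
  symm : ∀ V W, P V W = P W V
  add_left : ∀ U V W, P (U + V) W = P U W + P V W
  smul_left : ∀ (c : ℝ) (V W : Mat d₁ d₂), P (c • V) W = c * P V W
  nonneg : ∀ V, 0 ≤ P V V

/-- `N` is a norm on matrix space. -/
def IsNorm {d₁ d₂ : ℕ} (N : Mat d₁ d₂ → ℝ) : Prop :=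
  (∀ x y, N (x + y) ≤ N x + N y) ∧ (∀ (c : ℝ) x, N (c • x) = |c| * N x) ∧
    ∀ x, N x = 0 → x = 0

/-- Pseudo-norm `‖V‖_Π`. -/
noncomputable def pnorm {d₁ d₂ : ℕ} (P : Mat d₁ d₂ → Mat d₁ d₂ → ℝ) (V : Mat d₁ d₂) : ℝ :=
  Real.sqrt (P V V)

/-- Pseudo-norm of a pair `‖[V,W]‖_Π`. -/
noncomputable def pairPi {d₁ d₂ : ℕ} (P : Mat d₁ d₂ → Mat d₁ d₂ → ℝ) (V W : Mat d₁ d₂) : ℝ :=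
  Real.sqrt (P V V + P W W)

/-- Pseudo-norm of a triple `‖[V,W,u]‖_Π`. -/
noncomputable def triplePi {d₁ d₂ n : ℕ} (P : Mat d₁ d₂ → Mat d₁ d₂ → ℝ)
    (V W : Mat d₁ d₂) (u : Fin n → ℝ) : ℝ :=
  Real.sqrt (P V V + P W W + ∑ i, (u i) ^ 2)

/-- Normalized design `𝔛^{(n)}(V)`. -/
noncomputable def designOpN {d₁ d₂ n : ℕ} (X : Fin n → Mat d₁ d₂) (V : Mat d₁ d₂) :
    Fin n → ℝ := fun i => dotM (X i) V / Real.sqrt n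

/-- Normalized augmented design `𝔐^{(n)}(V,u) = 𝔛^{(n)}(V) + u`. -/
noncomputable def MopN {d₁ d₂ n : ℕ} (X : Fin n → Mat d₁ d₂) (V : Mat d₁ d₂) (u : Fin n → ℝ) :
    Fin n → ℝ := fun i => dotM (X i) V / Real.sqrt n + u i

/-- The nonincreasing rearrangement `u♯` of the absolute values of `u`. -/
noncomputable def sharp {n : ℕ} (u : Fin n → ℝ) : Fin n → ℝ :=
  fun i => |u ((Tuple.sort fun k => -|u k|) i)|

/-- The Slope weights `ωᵢ = √(log (A n / i))`, `i = 1, …, n`. -/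
noncomputable def slopeW (A : ℝ) (n : ℕ) (i : Fin n) : ℝ :=
  Real.sqrt (Real.log (A * n / ((i : ℕ) + 1)))

/-- The Slope norm `‖u‖♯ = ∑ᵢ ωᵢ u♯ᵢ`. -/
noncomputable def slope {n : ℕ} (A : ℝ) (u : Fin n → ℝ) : ℝ :=
  ∑ i, slopeW A n i * sharp u i

/-- The tail sum `∑_{i=o+1}^n ωᵢ u♯ᵢ`. -/
noncomputable def slopeTail {n : ℕ} (A : ℝ) (o : ℕ) (u : Fin n → ℝ) : ℝ :=
  ∑ i ∈ Finset.univ.filter (fun i : Fin n => o ≤ (i : ℕ)), slopeW A n i * sharp u i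

/-- `Ω = (∑_{i=1}^o ωᵢ²)^{1/2}`. -/
noncomputable def bigOmega (A : ℝ) (n o : ℕ) : ℝ :=
  Real.sqrt (∑ i ∈ Finset.univ.filter (fun i : Fin n => (i : ℕ) < o), (slopeW A n i) ^ 2)

/-- Number of nonzero coordinates `‖u‖₀`. -/
noncomputable def supp0 {n : ℕ} (u : Fin n → ℝ) : ℕ :=
  (Finset.univ.filter (fun i => u i ≠ 0)).card

/-- The estimator objective (q = 2). -/
noncomputable def objective {d₁ d₂ n : ℕ} (X : Fin n → Mat d₁ d₂) (y : Fin n → ℝ)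
    (R S : Mat d₁ d₂ → ℝ) (A lam chi tau : ℝ) (B Γ : Mat d₁ d₂) (θ : Fin n → ℝ) : ℝ :=
  (1 / 2) * ∑ i, (y i / Real.sqrt n - dotM (X i) (B + Γ) / Real.sqrt n - θ i) ^ 2
    + lam * R B + chi * S Γ + tau * slope A θ

/-- The constraint `‖B‖_∞ ≤ a` with `a ∈ (0, ∞]`. -/
def InfLe {d₁ d₂ : ℕ} (B : Mat d₁ d₂) (a : ℝ≥0∞) : Prop :=
  ∀ i j, ENNReal.ofReal |B i j| ≤ a

lemma nrm2_sq {n : ℕ} (u : Fin n → ℝ) : nrm2 u ^ 2 = ∑ i, u i ^ 2 :=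
  Real.sq_sqrt (Finset.sum_nonneg fun _ _ => sq_nonneg _)

lemma slope_zero {n : ℕ} (A : ℝ) : slope A (fun _ : Fin n => (0 : ℝ)) = 0 := by
  simp [slope, sharp]

lemma triplePi_zero {d₁ d₂ n : ℕ} (P : Mat d₁ d₂ → Mat d₁ d₂ → ℝ) (V W : Mat d₁ d₂) :
    triplePi P V W (fun _ : Fin n => (0 : ℝ)) = pairPi P V W := by
  simp [triplePi, pairPi]

lemma MopN_zero {d₁ d₂ n : ℕ} (X : Fin n → Mat d₁ d₂) (V : Mat d₁ d₂) :
    MopN X V (fun _ => 0) = designOpN X V := by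
  funext i
  simp [MopN, designOpN]

lemma dotM_add {d₁ d₂ : ℕ} (U V W : Mat d₁ d₂) : dotM U (V + W) = dotM U V + dotM U W := by
  simp [dotM, mul_add, Finset.sum_add_distrib]

lemma dotM_smul {d₁ d₂ : ℕ} (c : ℝ) (U V : Mat d₁ d₂) : dotM U (c • V) = c * dotM U V := by
  simp only [dotM, Finset.mul_sum, Pi.smul_apply, smul_eq_mul]
  exact Finset.sum_congr rfl fun i _ => Finset.sum_congr rfl fun j _ => by ring

lemma IsNorm.nonneg {d₁ d₂ : ℕ} {N : Mat d₁ d₂ → ℝ} (h : IsNorm N) (V : Mat d₁ d₂) :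
    0 ≤ N V := by
  have h0 : N 0 = 0 := by simpa using h.2.1 0 0
  have hneg : N (-V) = N V := by simpa using h.2.1 (-1) V
  have := h.1 V (-V)
  rw [add_neg_cancel, h0, hneg] at this
  linarith

lemma IsNorm.combo_le {d₁ d₂ : ℕ} {N : Mat d₁ d₂ → ℝ} (h : IsNorm N) (V W : Mat d₁ d₂)
    {t : ℝ} (h0 : 0 ≤ t) (h1 : t ≤ 1) :
    N ((1 - t) • V + t • W) ≤ N V + t * (N W - N V) := by
  have := h.1 ((1 - t) • V) (t • W)
  rw [h.2.1, h.2.1, abs_of_nonneg h0, abs_of_nonneg (sub_nonneg.2 h1)] at this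
  linarith

lemma InfLe.combo {d₁ d₂ : ℕ} {V W : Mat d₁ d₂} {a : ℝ≥0∞} (hV : InfLe V a) (hW : InfLe W a)
    {t : ℝ} (h0 : 0 ≤ t) (h1 : t ≤ 1) : InfLe ((1 - t) • V + t • W) a := by
  intro i j
  have hle : |((1 - t) • V + t • W) i j| ≤ max |V i j| |W i j| := by
    have h := abs_add_le ((1 - t) * V i j) (t * W i j)
    rw [abs_mul, abs_mul, abs_of_nonneg h0, abs_of_nonneg (sub_nonneg.2 h1)] at h
    have hv := mul_le_mul_of_nonneg_left (le_max_left |V i j| |W i j|) (sub_nonneg.2 h1)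
    have hw := mul_le_mul_of_nonneg_left (le_max_right |V i j| |W i j|) h0
    simp only [Pi.add_apply, Pi.smul_apply, smul_eq_mul]
    linarith
  refine (ENNReal.ofReal_le_ofReal hle).trans ?_
  rcases max_choice |V i j| |W i j| with h | h <;> rw [h]
  exacts [hV i j, hW i j]

/-- The one-variable form of first-order optimality: a quadratic vanishing at `0` and nonnegative
on `(0, 1]` has nonnegative slope at `0`. -/
lemma nonneg_of_small_steps {c q : ℝ} (h : ∀ t : ℝ, 0 < t → t ≤ 1 → 0 ≤ t * c + t ^ 2 * q) :
    0 ≤ c := by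
  by_contra! hc
  have hq : 0 < |q| + 1 := by positivity
  have hcq : 0 < -c / (|q| + 1) := div_pos (by linarith) hq
  -- a step at which the quadratic term is strictly dominated by the linear one
  obtain ⟨t, ht, ht1, hts⟩ : ∃ t : ℝ, 0 < t ∧ t ≤ 1 ∧ t ≤ -c / (|q| + 1) :=
    ⟨min 1 (-c / (|q| + 1)), lt_min one_pos hcq, min_le_left _ _, min_le_right _ _⟩
  rw [le_div_iff₀ hq] at hts
  have hlt : c + t * q < 0 := by
    nlinarith [mul_le_mul_of_nonneg_left (le_abs_self q) ht.le]
  nlinarith [h t ht ht1, mul_neg_of_pos_of_neg ht hlt]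

/-- Variational inequality for the minimizer in `(B, Γ)` with `θ = θ̂` fixed, in the direction of
a feasible pair `(B, Γ)`. -/
lemma optimality {d₁ d₂ n : ℕ} {X : Fin n → Mat d₁ d₂} {y : Fin n → ℝ}
    {R S : Mat d₁ d₂ → ℝ} (hR : IsNorm R) (hS : IsNorm S) {A lam chi tau : ℝ}
    (hlam : 0 < lam) (hchi : 0 < chi) {a : ℝ≥0∞} {Bh Γh : Mat d₁ d₂} {θh : Fin n → ℝ}
    (hfeas : InfLe Bh a)
    (hmin : ∀ (B Γ : Mat d₁ d₂) (θ : Fin n → ℝ), InfLe B a →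
      objective X y R S A lam chi tau Bh Γh θh ≤ objective X y R S A lam chi tau B Γ θ)
    {B Γ : Mat d₁ d₂} (hB : InfLe B a) :
    0 ≤ ∑ i, (y i / Real.sqrt n - dotM (X i) (Bh + Γh) / Real.sqrt n - θh i)
          * designOpN X ((Bh - B) + (Γh - Γ)) i
        + (lam * (R B - R Bh) + chi * (S Γ - S Γh)) := by
  set v := designOpN X ((Bh - B) + (Γh - Γ)) with hv
  refine nonneg_of_small_steps (q := (1 / 2) * ∑ i, v i ^ 2) fun t ht ht1 => ?_
  have h := hmin ((1 - t) • Bh + t • B) ((1 - t) • Γh + t • Γ) θh (hfeas.combo hB ht.le ht1)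
  have hr := mul_le_mul_of_nonneg_left (hR.combo_le Bh B ht.le ht1) hlam.le
  have hs := mul_le_mul_of_nonneg_left (hS.combo_le Γh Γ ht.le ht1) hchi.le
  have hmove : (1 - t) • Bh + t • B + ((1 - t) • Γh + t • Γ)
      = (Bh + Γh) + (-t) • ((Bh - B) + (Γh - Γ)) := by
    module
  have hsum : ∑ i, (y i / Real.sqrt n
        - dotM (X i) ((1 - t) • Bh + t • B + ((1 - t) • Γh + t • Γ)) / Real.sqrt n - θh i) ^ 2
      = ∑ i, (y i / Real.sqrt n - dotM (X i) (Bh + Γh) / Real.sqrt n - θh i) ^ 2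
        + 2 * t * ∑ i, (y i / Real.sqrt n - dotM (X i) (Bh + Γh) / Real.sqrt n - θh i) * v i
        + t ^ 2 * ∑ i, v i ^ 2 := by
    rw [Finset.mul_sum, Finset.mul_sum, ← Finset.sum_add_distrib, ← Finset.sum_add_distrib]
    refine Finset.sum_congr rfl fun i _ => ?_
    rw [hmove, dotM_add, dotM_smul, hv, designOpN]
    ring
  simp only [objective, hsum] at h
  nlinarith

/-- MP + ATP + IP imply the recursion inequality in `[Δ_B, Δ_Γ]`
for the (q = 2) estimator. -/
theorem stmt13
    (d₁ d₂ n o : ℕ) (hn : 1 ≤ n) (ho : 1 ≤ o) (hon : o ≤ n)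
    (A : ℝ) (hA : 2 ≤ A)
    (X : Fin n → Mat d₁ d₂)
    (P : Mat d₁ d₂ → Mat d₁ d₂ → ℝ) (hP : IsPSDForm P)
    (R S : Mat d₁ d₂ → ℝ) (hR : IsNorm R) (hS : IsNorm S)
    (lam chi tau : ℝ) (hlam : 0 < lam) (hchi : 0 < chi) (htau : 0 < tau)
    (a : ℝ≥0∞) (ha : 0 < a)
    (f ξ θstar : Fin n → ℝ) (hθsparse : supp0 θstar ≤ o)
    (y : Fin n → ℝ) (hy : y = fun i => f i + Real.sqrt n * θstar i + ξ i)
    (Bh Γh : Mat d₁ d₂) (θh : Fin n → ℝ)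
    (hfeas : InfLe Bh a)
    (hmin : ∀ (B Γ : Mat d₁ d₂) (θ : Fin n → ℝ), InfLe B a →
      objective X y R S A lam chi tau Bh Γh θh ≤ objective X y R S A lam chi tau B Γ θ)
    -- design constants
    (f₁ f₂ f₃ f₄ t₁ t₂ t₃ t₄ b₁ b₂ b₃ b₄ : ℝ)
    (hf₁ : 0 < f₁) (hf₂ : 0 < f₂) (hf₃ : 0 < f₃) (hf₄ : 0 < f₄)
    (ht₁ : 0 < t₁) (ht₂ : 0 < t₂) (ht₃ : 0 < t₃) (ht₄ : 0 < t₄)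
    (hb₁ : 0 < b₁) (hb₂ : 0 < b₂) (hb₃ : 0 < b₃) (hb₄ : 0 < b₄)
    -- MP_{R,S,‖·‖♯}(f₁,f₂,f₃,f₄)
    (hMP : ∀ (V W : Mat d₁ d₂) (u : Fin n → ℝ),
      |ipV (fun i => ξ i / Real.sqrt n) (MopN X (V + W) u)| ≤
        f₁ * triplePi P V W u + f₂ * R V + f₃ * S W + f₄ * slope A u)
    -- ATP_{R,S,‖·‖♯}(t₁,t₂,t₃,t₄)
    (hATP : ∀ (V W : Mat d₁ d₂) (u : Fin n → ℝ),
      t₁ * triplePi P V W u - t₂ * R V - t₃ * S W - t₄ * slope A u ≤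
        Real.sqrt (max ((nrm2 (MopN X (V + W) u)) ^ 2 - 2 * P V W) 0))
    -- IP_{R,S,‖·‖♯}(b₁,b₂,b₃,b₄)
    (hIP : ∀ (V W : Mat d₁ d₂) (u : Fin n → ℝ),
      |ipV u (designOpN X (V + W))| ≤
        b₁ * pairPi P V W * nrm2 u + b₂ * R V * nrm2 u + b₃ * S W * nrm2 u
          + b₄ * pairPi P V W * slope A u)
    (σ fstar : ℝ) (hσ : 0 < σ) (hfstar : 0 ≤ fstar) :
    ∀ B Γ : Mat d₁ d₂, InfLe B a →
      |P (Bh - B) (Γh - Γ)| ≤ fstar * S (Γh - Γ) →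
      ∀ blacktri blackdown : ℝ,
        blacktri = max (σ * t₂)
            (2 * f₂ + 2 * b₂ * nrm2 (fun i => θh i - θstar i)) * R (Bh - B)
          + max (σ * t₃)
            (2 * f₃ + 2 * fstar + 2 * b₃ * nrm2 (fun i => θh i - θstar i)) * S (Γh - Γ) →
        blackdown = lam * (R B - R Bh) + chi * (S Γ - S Γh) →
        (nrm2 (fun i => (dotM (X i) (Bh + Γh) - f i) / Real.sqrt n)) ^ 2
          + (max (t₁ * pairPi P (Bh - B) (Γh - Γ) - blacktri / σ) 0) ^ 2 ≤
        (nrm2 (fun i => (dotM (X i) (B + Γ) - f i) / Real.sqrt n)) ^ 2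
          + (2 * f₁ + 2 * b₁ * nrm2 (fun i => θh i - θstar i)
              + 2 * b₄ * slope A (fun i => θh i - θstar i))
            * pairPi P (Bh - B) (Γh - Γ)
          + blacktri + 2 * blackdown := by
  intro B Γ hB hPf blacktri blackdown htri hdown
  have hn0 : Real.sqrt n ≠ 0 := (Real.sqrt_pos.2 (by exact_mod_cast hn)).ne'
  have hopt := optimality hR hS hlam hchi hfeas hmin (Γ := Γ) hB
  rw [← hdown] at hopt
  have hmp := hMP (Bh - B) (Γh - Γ) (fun _ => 0)
  have hatp := hATP (Bh - B) (Γh - Γ) (fun _ => 0)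
  have hip := hIP (Bh - B) (Γh - Γ) (fun i => θh i - θstar i)
  rw [MopN_zero, triplePi_zero, slope_zero] at hmp hatp
  rw [nrm2_sq] at hatp
  set v := designOpN X ((Bh - B) + (Γh - Γ)) with hv
  set p := pairPi P (Bh - B) (Γh - Γ)
  set N := nrm2 (fun i => θh i - θstar i)
  set Q := slope A (fun i => θh i - θstar i)
  have hRn := hR.nonneg (Bh - B)
  have hSn := hS.nonneg (Γh - Γ)
  -- polarization, with the residual rewritten through the data model
  have hpolar : ∑ i, ((dotM (X i) (Bh + Γh) - f i) / Real.sqrt n) ^ 2 + ∑ i, v i ^ 2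
      = ∑ i, ((dotM (X i) (B + Γ) - f i) / Real.sqrt n) ^ 2
        + 2 * ipV (fun i => ξ i / Real.sqrt n) v
        - 2 * ipV (fun i => θh i - θstar i) v
        - 2 * ∑ i, (y i / Real.sqrt n - dotM (X i) (Bh + Γh) / Real.sqrt n - θh i) * v i := by
    simp only [ipV, Finset.mul_sum]
    rw [← Finset.sum_add_distrib, ← Finset.sum_add_distrib, ← Finset.sum_sub_distrib,
      ← Finset.sum_sub_distrib]
    refine Finset.sum_congr rfl fun i _ => ?_
    have hd : dotM (X i) (Bh + Γh) = dotM (X i) (B + Γ) + dotM (X i) ((Bh - B) + (Γh - Γ)) := by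
      rw [← dotM_add]
      congr 1
      abel
    have hvi : v i = dotM (X i) ((Bh - B) + (Γh - Γ)) / Real.sqrt n := rfl
    have hyi : y i / Real.sqrt n = f i / Real.sqrt n + θstar i + ξ i / Real.sqrt n := by
      rw [hy]
      field_simp
    rw [hyi, hvi, hd]
    ring
  have hvn : 0 ≤ ∑ i, v i ^ 2 := Finset.sum_nonneg fun _ _ => sq_nonneg _
  have hmax₂ := mul_le_mul_of_nonneg_right (le_max_left (σ * t₂) (2 * f₂ + 2 * b₂ * N)) hRn
  have hmax₃ :=
    mul_le_mul_of_nonneg_right (le_max_left (σ * t₃) (2 * f₃ + 2 * fstar + 2 * b₃ * N)) hSn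
  have hmax₂' := mul_le_mul_of_nonneg_right (le_max_right (σ * t₂) (2 * f₂ + 2 * b₂ * N)) hRn
  have hmax₃' :=
    mul_le_mul_of_nonneg_right (le_max_right (σ * t₃) (2 * f₃ + 2 * fstar + 2 * b₃ * N)) hSn
  have hdiv : t₂ * R (Bh - B) + t₃ * S (Γh - Γ) ≤ blacktri / σ := by
    rw [le_div_iff₀ hσ]
    linarith
  have hlow : (max (t₁ * p - blacktri / σ) 0) ^ 2 ≤ ∑ i, v i ^ 2 + 2 * fstar * S (Γh - Γ) := by
    have h1 : max (t₁ * p - blacktri / σ) 0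
        ≤ Real.sqrt (max (∑ i, v i ^ 2 - 2 * P (Bh - B) (Γh - Γ)) 0) :=
      max_le (by linarith) (Real.sqrt_nonneg _)
    have h2 := pow_le_pow_left₀ (le_max_right _ _) h1 2
    rw [Real.sq_sqrt (le_max_right _ _)] at h2
    have hfS := mul_nonneg hfstar hSn
    exact h2.trans (max_le (by linarith [neg_abs_le (P (Bh - B) (Γh - Γ))]) (by linarith))
  rw [nrm2_sq, nrm2_sq]
  linarith [le_abs_self (ipV (fun i => ξ i / Real.sqrt n) v),
    neg_abs_le (ipV (fun i => θh i - θstar i) v)]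

end Stmt13
end
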